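/- arXiv:1807.05869 — 2 statements merged into one kernel-verified Lean document; each statement's English description precedes it below -/
import Mathlib

section
/- Let k be a field of characteristic 0, let m, n ≥ 1, and in R = k[x_1,…,x_n] let e_i denote the i-th elementary symmetric polynomial in x_1,…,x_n and ê_i = e_i(x_1^m,…,x_n^m). Let A(m,n) = R^{S_n}/((ê_1,…,ê_n)·R^{S_n}) be the quotient of the subalgebra of symmetric polynomials by the ideal generated by ê_1,…,ê_n, graded by polynomial degree. Then dim_k A(m,n) = m^n and the Hilbert polynomial of A(m,n) is p(A(m,n),t) = Π_{i=1}^n (1 − t^{im})/(1 − t^i) = Π_{i=1}^n (1 + t^i + t^{2i} + ⋯ + t^{(m−1)i}). -/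
/-!
Order monomials in `x_1, …, x_n` lexicographically. The leading exponent of `∏ e_i ^ a_i` is the
partition `accF n a`, and the leading exponent of `ê_i` is `m` times that of `e_i`, because `ê_i`
arises from `e_i` by `x_j ↦ x_j ^ m`. Hence the products
`b a = ∏ e_i ^ (a_i mod m) * ê_i ^ (a_i div m)` are monic with leading exponent `accF n a`. Every
antitone exponent is `accF n a` for exactly one `a`, and leading exponents of symmetric polynomials
are antitone, so the `b a` form a `k`-basis of the symmetric polynomials (`b_linearIndependent`,
`b_span`).

Multiplication by `ê_i` sends `b a` to `b (a + m δ_i)` (`b_mul_H`), so the ideal `(ê_1, …, ê_n)` is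
spanned by the `b a` with some `a_i ≥ m`. The remaining `b a`, which are the monomials `∏ e_i ^ a_i`
with all `a_i < m`, therefore map to a basis of `A(m,n)` (`v_linearIndependent`, `v_span`). As `b a`
is homogeneous of degree `∑ i a_i`, this basis is compatible with the grading (`grading_eq`), and
counting its elements gives both claims.
-/

open MvPolynomial

set_option synthInstance.maxHeartbeats 1000000
set_option maxHeartbeats 2000000

/-- The `i`-th elementary symmetric polynomial evaluated at the `m`-th powers of
the variables: `ê_i = e_i(x₁^m, …, x_n^m)`. -/
noncomputable def esymmPow (k : Type) [Field k] (n m i : ℕ) : MvPolynomial (Fin n) k :=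
  aeval (fun j : Fin n => (X j : MvPolynomial (Fin n) k) ^ m) (esymm (Fin n) k i)

/-- The ideal `(ê_1, …, ê_n)·R^{S_n}` of the algebra of symmetric polynomials
`R^{S_n}`. -/
noncomputable def ehatIdeal (k : Type) [Field k] (n m : ℕ) :
    Ideal (symmetricSubalgebra (Fin n) k) :=
  Ideal.span {x : symmetricSubalgebra (Fin n) k |
    ∃ i ∈ Finset.Icc 1 n, (x : MvPolynomial (Fin n) k) = esymmPow k n m i}

/-- The relative coinvariant ring `A(m,n) = R^{S_n}/((ê_1,…,ê_n)·R^{S_n})` of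
the symmetric group `S_n` inside the complex reflection group `G(m,1,n)`. -/
noncomputable abbrev Amn (k : Type) [Field k] (n m : ℕ) :=
  (symmetricSubalgebra (Fin n) k) ⧸ ehatIdeal k n m

/-- The grading on `A(m,n)` by polynomial degree: the degree-`d` piece is
spanned by the images of the homogeneous degree-`d` symmetric polynomials. -/
noncomputable def AmnGrading (k : Type) [Field k] (n m d : ℕ) :
    Submodule k (Amn k n m) :=
  Submodule.span k ((Ideal.Quotient.mk (ehatIdeal k n m)) ''
    {x : symmetricSubalgebra (Fin n) k | ((x : MvPolynomial (Fin n) k)).IsHomogeneous d})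

namespace AmnProof

open AddMonoidAlgebra

/-! ### Leading monomials for the lexicographic order -/

section LeadingMonomial

variable {k : Type} [Field k] {n : ℕ}

/-- The polynomial `p` is monic with leading exponent `s` for the lexicographic order. -/
def HasLead (p : MvPolynomial (Fin n) k) (s : Fin n →₀ ℕ) : Prop :=
  Monic toLex p ∧ supDegree toLex p = toLex s

lemma HasLead.one : HasLead (1 : MvPolynomial (Fin n) k) 0 :=
  ⟨monic_one toLex.injective, supDegree_toLex_C 1⟩

lemma HasLead.mul {p q : MvPolynomial (Fin n) k} {s t : Fin n →₀ ℕ}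
    (hp : HasLead p s) (hq : HasLead q t) : HasLead (p * q) (s + t) := by
  refine ⟨hp.1.mul toLex.injective toLex_add hq.1, ?_⟩
  have := hq.1.supDegree_mul_of_ne_zero_left toLex.injective toLex_add hp.1.ne_zero
  rw [hp.2, hq.2] at this
  exact this

lemma HasLead.pow {p : MvPolynomial (Fin n) k} {s : Fin n →₀ ℕ}
    (hp : HasLead p s) (r : ℕ) : HasLead (p ^ r) (r • s) := by
  induction r with
  | zero => simpa using HasLead.one
  | succ r ih => rw [pow_succ, succ_nsmul]; exact ih.mul hp

lemma HasLead.prod {ι : Type} (S : Finset ι) {p : ι → MvPolynomial (Fin n) k}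
    {s : ι → Fin n →₀ ℕ} (hp : ∀ i, HasLead (p i) (s i)) :
    HasLead (∏ i ∈ S, p i) (∑ i ∈ S, s i) := by
  classical
  induction S using Finset.induction_on with
  | empty => simpa using HasLead.one
  | insert i S hi ih =>
    rw [Finset.prod_insert hi, Finset.sum_insert hi]
    exact (hp i).mul ih

lemma HasLead.coeff_eq_one {p : MvPolynomial (Fin n) k} {s : Fin n →₀ ℕ}
    (hp : HasLead p s) : MvPolynomial.coeff s p = 1 := by
  have := hp.1
  rwa [AddMonoidAlgebra.Monic, leadingCoeff_toLex, hp.2, ofLex_toLex] at this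

/-- Substituting `x_j ↦ x_j ^ m` multiplies the leading exponent by `m`, since `t ↦ m • t` is
monotone for the lexicographic order. -/
lemma HasLead.expand {p : MvPolynomial (Fin n) k} {s : Fin n →₀ ℕ}
    (hp : HasLead p s) {m : ℕ} (hm : m ≠ 0) : HasLead (expand m p) (m • s) := by
  have hsup : supDegree toLex (MvPolynomial.expand m p) = toLex (m • s) := by
    apply le_antisymm
    · refine Finset.sup_le fun t ht => ?_
      change t ∈ MvPolynomial.support _ at ht
      rw [support_expand _ hm, Finset.mem_image] at ht
      obtain ⟨u, hu, rfl⟩ := ht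
      have : toLex u ≤ toLex s := hp.2 ▸ Finset.le_sup (f := toLex) hu
      exact nsmul_le_nsmul_right this m
    · apply Finset.le_sup (f := toLex)
      change _ ∈ MvPolynomial.support _
      rw [mem_support_iff, coeff_expand_smul _ hm, hp.coeff_eq_one]
      exact one_ne_zero
  refine ⟨?_, hsup⟩
  rw [AddMonoidAlgebra.Monic, leadingCoeff_toLex, hsup, ofLex_toLex, coeff_expand_smul _ hm,
    hp.coeff_eq_one]

/-- `Fin.accumulate` with values in finitely supported functions: `accF n a` is the leading exponent
of `e_1 ^ a_0 ⋯ e_n ^ a_{n-1}`, whose `j`-th entry is the sum of the `a_i` over `i ≥ j`. -/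
noncomputable def accF (n : ℕ) : (Fin n → ℕ) →+ (Fin n →₀ ℕ) :=
  (Finsupp.linearEquivFunOnFinite ℕ ℕ (Fin n)).symm.toLinearMap.toAddMonoidHom.comp
    (Fin.accumulate n n)

lemma coe_accF (a : Fin n → ℕ) : ⇑(accF n a) = Fin.accumulate n n a := rfl

lemma accF_injective : Function.Injective (accF n) := fun a b h =>
  Fin.accumulate_injective le_rfl (by rw [← coe_accF, h, coe_accF])

lemma hasLead_esymm (i : Fin n) :
    HasLead (esymm (Fin n) k (i + 1)) (accF n (Pi.single i 1)) := by
  refine ⟨monic_esymm i.2, ?_⟩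
  apply ofLex.injective
  apply DFunLike.coe_injective
  rw [supDegree_esymm i.2, ofLex_toLex, coe_accF, Finsupp.single_eq_pi_single]

lemma accF_sum (a : Fin n → ℕ) : ∑ i, a i • accF n (Pi.single i 1) = accF n a := by
  simp_rw [← map_nsmul, ← map_sum]
  congr 1
  ext j
  simp [Finset.sum_apply, Pi.single_apply]

end LeadingMonomial

/-! ### A basis of the symmetric polynomials adapted to the ideal -/

section Basis

variable (k : Type) [Field k] (n m : ℕ)

lemma esymmPow_eq_expand (i : ℕ) : esymmPow k n m i = expand m (esymm (Fin n) k i) := rfl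

lemma esymmPow_isSymmetric (i : ℕ) : (esymmPow k n m i).IsSymmetric := fun e => by
  rw [esymmPow_eq_expand, rename_expand, rename_esymm]

/-- The elementary symmetric polynomial `e_{i+1}` as an element of the symmetric subalgebra. -/
noncomputable def E (i : Fin n) : symmetricSubalgebra (Fin n) k :=
  ⟨esymm (Fin n) k (i + 1), esymm_isSymmetric _ _ _⟩

/-- The polynomial `ê_{i+1}` as an element of the symmetric subalgebra. -/
noncomputable def H (i : Fin n) : symmetricSubalgebra (Fin n) k :=
  ⟨esymmPow k n m (i + 1), esymmPow_isSymmetric _ _ _ _⟩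

/-- The product of the `e_{i+1} ^ (a_i mod m) * ê_{i+1} ^ (a_i div m)`. It has the same leading
exponent and the same degree as the monomial `∏ e_{i+1} ^ a_i`. -/
noncomputable def b (a : Fin n → ℕ) : symmetricSubalgebra (Fin n) k :=
  ∏ i, (E k n i ^ (a i % m) * H k n m i ^ (a i / m))

lemma coe_b (a : Fin n → ℕ) : (b k n m a : MvPolynomial (Fin n) k) =
    ∏ i : Fin n, (esymm (Fin n) k (i + 1) ^ (a i % m) * esymmPow k n m (i + 1) ^ (a i / m)) := by
  simp [b, E, H]

variable {n m} in
lemma hasLead_b (hm : 1 ≤ m) (a : Fin n → ℕ) :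
    HasLead (b k n m a : MvPolynomial (Fin n) k) (accF n a) := by
  rw [coe_b, ← accF_sum]
  apply HasLead.prod
  intro i
  have h := ((hasLead_esymm (k := k) i).pow (a i % m)).mul
    (((hasLead_esymm (k := k) i).expand (m := m) (by omega)).pow (a i / m))
  rwa [smul_smul, ← add_smul, mul_comm (a i / m), Nat.mod_add_div] at h

lemma esymm_isHomogeneous (i : ℕ) : (esymm (Fin n) k i).IsHomogeneous i := by
  rw [esymm]
  apply IsHomogeneous.sum
  intro s hs
  have := IsHomogeneous.prod s (fun j => (X j : MvPolynomial (Fin n) k)) (fun _ => 1)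
    (fun j _ => isHomogeneous_X k j)
  simpa [(Finset.mem_powersetCard.1 hs).2] using this

lemma b_isHomogeneous (a : Fin n → ℕ) :
    (b k n m a : MvPolynomial (Fin n) k).IsHomogeneous (∑ i : Fin n, ((i : ℕ) + 1) * a i) := by
  rw [coe_b]
  apply IsHomogeneous.prod
  intro i _
  have h := ((esymm_isHomogeneous k n (i + 1)).pow (a i % m)).mul
    (((esymm_isHomogeneous k n (i + 1)).aeval (fun j : Fin n => (X j : MvPolynomial (Fin n) k) ^ m)
      (fun j => isHomogeneous_X_pow j m)).pow (a i / m))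
  have e : (i + 1 : ℕ) * (a i % m) + m * (i + 1) * (a i / m) = (i + 1) * a i := by
    conv_rhs => rw [← Nat.mod_add_div (a i) m]
    ring
  rwa [e] at h

variable {n m}

/-- The leading exponents `accF n a` are pairwise distinct, so no cancellation can occur. -/
lemma b_linearIndependent (hm : 1 ≤ m) : LinearIndependent k (b k n m) := by
  rw [linearIndependent_iff']
  intro s g hg
  by_contra! ⟨i, his, hi⟩
  have hcoe : ∑ a ∈ s, g a • (b k n m a : MvPolynomial (Fin n) k) = 0 := by
    simpa using congrArg (Subtype.val) hg
  classical
  rw [← Finset.sum_filter_of_ne (p := fun a => g a ≠ 0)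
    (fun a _ h h0 => h (by rw [h0, zero_smul]))] at hcoe
  have hsup : ∀ a, g a ≠ 0 →
      supDegree toLex (g a • (b k n m a : MvPolynomial (Fin n) k)) = toLex (accF n a) := by
    intro a ha
    rw [← (hasLead_b k hm a).2]
    change Finset.sup (MvPolynomial.support _) _ = Finset.sup (MvPolynomial.support _) _
    rw [MvPolynomial.support_smul_eq ha]
  refine sum_ne_zero_of_injOn_supDegree (D := toLex)
    (f := fun a => g a • (b k n m a : MvPolynomial (Fin n) k))
    ⟨i, Finset.mem_filter.2 ⟨his, hi⟩⟩ ?_ ?_ hcoe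
  · intro a ha
    exact smul_ne_zero (Finset.mem_filter.1 ha).2 (hasLead_b k hm a).1.ne_zero
  · intro a ha c hc h
    simp only [Finset.coe_filter, Set.mem_ofPred_eq] at ha hc
    simp only [Function.comp, hsup a ha.2, hsup c hc.2] at h
    exact accF_injective (toLex.injective h)

/-- The leading exponent of a nonzero symmetric polynomial `p` is antitone, hence equal to `accF n a`
for some `a`; subtracting a multiple of `b k n m a` lowers it, and the lexicographic order is
well-founded. -/
lemma b_span (hm : 1 ≤ m) : ⊤ ≤ Submodule.span k (Set.range (b k n m)) := by
  rintro ⟨p, hp⟩ -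
  induction he : p.supDegree toLex using WellFoundedLT.induction generalizing p with | _ t ih
  subst he
  obtain rfl | h0 := eq_or_ne p 0
  · exact Submodule.zero_mem _
  set c := p.leadingCoeff toLex with hc
  have hc0 : c ≠ 0 := by rwa [hc, Ne, leadingCoeff_eq_zero toLex.injective]
  set a := Fin.invAccumulate n n ⇑(ofLex <| p.supDegree toLex) with ha
  have hacc : toLex (accF n a) = p.supDegree toLex := by
    apply ofLex.injective
    apply DFunLike.coe_injective
    rw [ofLex_toLex, coe_accF]
    exact Fin.accumulate_invAccumulate le_rfl (IsSymmetric.antitone_supDegree hp)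
  set q : symmetricSubalgebra (Fin n) k := c • b k n m a with hq
  have hqv : (q : MvPolynomial (Fin n) k) = c • (b k n m a : MvPolynomial (Fin n) k) := rfl
  have hqmem : q ∈ Submodule.span k (Set.range (b k n m)) :=
    Submodule.smul_mem _ _ (Submodule.subset_span ⟨a, rfl⟩)
  have hd : supDegree toLex (q : MvPolynomial (Fin n) k) = p.supDegree toLex := by
    rw [← hacc, ← (hasLead_b k hm a).2]
    change Finset.sup (MvPolynomial.support _) _ = Finset.sup (MvPolynomial.support _) _
    rw [hqv, MvPolynomial.support_smul_eq hc0]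
  have hl : p.leadingCoeff toLex = leadingCoeff toLex (q : MvPolynomial (Fin n) k) := by
    rw [leadingCoeff_toLex (p := (q : MvPolynomial (Fin n) k)), hd, ← hacc, ofLex_toLex, hqv,
      MvPolynomial.coeff_smul, (hasLead_b k hm a).coeff_eq_one, smul_eq_mul, mul_one]
  obtain hlt | heq := supDegree_sub_lt_of_leadingCoeff_eq toLex.injective hd.symm hl
  · have := ih _ hlt (p - q) (Subalgebra.sub_mem _ hp q.2) rfl
    convert Submodule.add_mem _ this hqmem
    simp
  · convert hqmem

end Basis

/-! ### The quotient and its grading -/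

section Quotient

variable (k : Type) [Field k] {n m : ℕ}

lemma ehatIdeal_eq : ehatIdeal k n m = Ideal.span (Set.range (H k n m)) := by
  rw [ehatIdeal]
  congr 1
  ext x
  constructor
  · rintro ⟨i, hi, hx⟩
    rw [Finset.mem_Icc] at hi
    refine ⟨⟨i - 1, by omega⟩, Subtype.ext ?_⟩
    rw [hx]
    simp only [H]
    congr 1
    omega
  · rintro ⟨i, rfl⟩
    exact ⟨i + 1, Finset.mem_Icc.2 ⟨by omega, by omega⟩, rfl⟩

lemma b_mul_H (hm : 1 ≤ m) (a : Fin n → ℕ) (i : Fin n) :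
    b k n m a * H k n m i = b k n m (a + Pi.single i m) := by
  have hH : H k n m i = ∏ j, if j = i then H k n m j else 1 := by simp
  rw [hH, b, b, ← Finset.prod_mul_distrib]
  refine Finset.prod_congr rfl fun j _ => ?_
  by_cases h : j = i
  · subst h
    simp [Nat.add_div_right _ (show 0 < m by omega), pow_succ, mul_assoc]
  · simp [h]

lemma b_mem (a : Fin n → ℕ) (ha : ¬ ∀ i, a i < m) (hm : 1 ≤ m) :
    b k n m a ∈ ehatIdeal k n m := by
  push Not at ha
  obtain ⟨i, hi⟩ := ha
  have : a = (a - Pi.single i m) + Pi.single i m := by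
    ext j
    by_cases h : j = i
    · subst h; simp; omega
    · simp [h]
  rw [this, ← b_mul_H k hm, ehatIdeal_eq]
  exact Ideal.mul_mem_left _ _ (Ideal.subset_span ⟨i, rfl⟩)

/-- The image in `A(m,n)` of the monomial `∏ e_{i+1} ^ c_i` with all exponents `c_i < m`. -/
noncomputable def v (c : Fin n → Fin m) : Amn k n m :=
  Ideal.Quotient.mkₐ k (ehatIdeal k n m) (b k n m (fun i => c i))

/-- The linear map sending `b k n m a` to the basis vector indexed by `a` when all `a_i < m`, and to
`0` otherwise. It vanishes on the ideal and computes coordinates with respect to `v`. -/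
noncomputable def coord (hm : 1 ≤ m) :
    symmetricSubalgebra (Fin n) k →ₗ[k] ((Fin n → Fin m) →₀ k) :=
  (Module.Basis.mk (b_linearIndependent k hm) (b_span k hm)).constr k fun a =>
    if h : ∀ i, a i < m then Finsupp.single (fun i => ⟨a i, h i⟩) 1 else 0

lemma coord_b (hm : 1 ≤ m) (a : Fin n → ℕ) : coord k hm (b k n m a) =
    if h : ∀ i, a i < m then Finsupp.single (fun i => ⟨a i, h i⟩) 1 else 0 := by
  have := (Module.Basis.mk (b_linearIndependent k hm) (b_span k hm)).constr_basis k (fun a =>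
    if h : ∀ i, a i < m then Finsupp.single (fun i => (⟨a i, h i⟩ : Fin m)) (1 : k) else 0) a
  rwa [Module.Basis.mk_apply] at this

lemma coord_eq_zero (hm : 1 ≤ m) {x : symmetricSubalgebra (Fin n) k}
    (hx : x ∈ ehatIdeal k n m) : coord k hm x = 0 := by
  rw [ehatIdeal_eq, Ideal.mem_span_range_iff_exists_fun] at hx
  obtain ⟨c, rfl⟩ := hx
  rw [map_sum]
  refine Finset.sum_eq_zero fun i _ => ?_
  have hz : (coord k hm) ∘ₗ (LinearMap.mulRight k (H k n m i)) = 0 := by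
    apply (Module.Basis.mk (b_linearIndependent k hm) (b_span k hm)).ext
    intro a
    rw [Module.Basis.mk_apply, LinearMap.comp_apply, LinearMap.mulRight_apply, b_mul_H k hm,
      coord_b, dif_neg]
    · rfl
    · intro h
      have := h i
      simp at this
  exact LinearMap.congr_fun hz (c i)

lemma v_linearIndependent (hm : 1 ≤ m) : LinearIndependent k (v k (n := n) (m := m)) := by
  rw [linearIndependent_iff']
  intro s g hg c hc
  have hmem : ∑ c ∈ s, g c • b k n m (fun i => c i) ∈ ehatIdeal k n m := by
    rw [← Ideal.Quotient.eq_zero_iff_mem, ← Ideal.Quotient.mkₐ_eq_mk k, map_sum]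
    simpa [v] using hg
  have h := coord_eq_zero k hm hmem
  simp only [map_sum, map_smul, coord_b, Fin.is_lt, implies_true, dite_true, Fin.eta] at h
  have := DFunLike.congr_fun h c
  simpa [Finsupp.finsetSum_apply, Finsupp.single_apply, hc] using this

/-- Stated for an arbitrary condition `P` on exponents so as to serve both the whole quotient and its
graded pieces. -/
lemma mk_b_mem_span (hm : 1 ≤ m) (P : (Fin n → ℕ) → Prop) (a : Fin n → ℕ) (ha : P a) :
    Ideal.Quotient.mkₐ k (ehatIdeal k n m) (b k n m a) ∈ Submodule.span k
      (Set.range fun c : {c : Fin n → Fin m // P fun i => c i} => v k c.1) := by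
  by_cases h : ∀ i, a i < m
  · exact Submodule.subset_span ⟨⟨fun i => ⟨a i, h i⟩, ha⟩, rfl⟩
  · rw [Ideal.Quotient.mkₐ_eq_mk, Ideal.Quotient.eq_zero_iff_mem.2 (b_mem k a h hm)]
    exact Submodule.zero_mem _

lemma v_span (hm : 1 ≤ m) : ⊤ ≤ Submodule.span k (Set.range (v k (n := n) (m := m))) := by
  rintro x -
  obtain ⟨y, rfl⟩ := Ideal.Quotient.mkₐ_surjective k _ x
  have hy := b_span k hm (Submodule.mem_top (x := y))
  induction hy using Submodule.span_induction with
  | mem x h =>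
    obtain ⟨a, rfl⟩ := h
    refine Submodule.span_mono ?_ (mk_b_mem_span k hm (fun _ => True) a trivial)
    rintro _ ⟨c, rfl⟩
    exact ⟨c.1, rfl⟩
  | zero => rw [map_zero]; exact Submodule.zero_mem _
  | add x y _ _ hx hy => rw [map_add]; exact Submodule.add_mem _ hx hy
  | smul r x _ hx => rw [map_smul]; exact Submodule.smul_mem _ _ hx

lemma grading_eq (hm : 1 ≤ m) (d : ℕ) : AmnGrading k n m d = Submodule.span k
    (Set.range fun c : {c : Fin n → Fin m // ∑ i : Fin n, ((i : ℕ) + 1) * (c i : ℕ) = d} =>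
      v k c.1) := by
  apply le_antisymm
  · rw [AmnGrading, Submodule.span_le]
    rintro _ ⟨x, hx, rfl⟩
    -- The degree-`d` component of any symmetric polynomial is symmetric with image in the span: this
    -- can be checked on the homogeneous basis `b`.
    have key : ∀ y : symmetricSubalgebra (Fin n) k, ∃ z : symmetricSubalgebra (Fin n) k,
        (z : MvPolynomial (Fin n) k) = homogeneousComponent d (y : MvPolynomial (Fin n) k) ∧
        Ideal.Quotient.mkₐ k (ehatIdeal k n m) z ∈ Submodule.span k (Set.range
          fun c : {c : Fin n → Fin m // ∑ i : Fin n, ((i : ℕ) + 1) * (c i : ℕ) = d} =>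
            v k c.1) := by
      intro y
      have hy := b_span k hm (Submodule.mem_top (x := y))
      induction hy using Submodule.span_induction with
      | mem x h =>
        obtain ⟨a, rfl⟩ := h
        rw [homogeneousComponent_of_mem (b_isHomogeneous k n m a)]
        by_cases hd : d = ∑ i : Fin n, ((i : ℕ) + 1) * a i
        · refine ⟨b k n m a, by rw [if_pos hd], ?_⟩
          exact mk_b_mem_span k hm (fun a => ∑ i : Fin n, ((i : ℕ) + 1) * a i = d) a hd.symm
        · exact ⟨0, by rw [if_neg hd]; rfl, by rw [map_zero]; exact Submodule.zero_mem _⟩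
      | zero => exact ⟨0, by simp, by rw [map_zero]; exact Submodule.zero_mem _⟩
      | add x y _ _ hx hy =>
        obtain ⟨z, hz, hz'⟩ := hx
        obtain ⟨w, hw, hw'⟩ := hy
        refine ⟨z + w, by simp [hz, hw], ?_⟩
        rw [map_add]
        exact Submodule.add_mem _ hz' hw'
      | smul r x _ hx =>
        obtain ⟨z, hz, hz'⟩ := hx
        refine ⟨r • z, by simp [hz], ?_⟩
        rw [map_smul]
        exact Submodule.smul_mem _ _ hz'
    obtain ⟨z, hz, hz'⟩ := key x
    rw [homogeneousComponent_of_mem hx, if_pos rfl] at hz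
    rw [← Subtype.ext hz]
    exact hz'
  · rw [Submodule.span_le]
    rintro _ ⟨⟨c, hc⟩, rfl⟩
    refine Submodule.subset_span ⟨b k n m (fun i => c i), ?_, rfl⟩
    have := b_isHomogeneous k n m (fun i => c i)
    rwa [hc] at this

end Quotient

end AmnProof

/-- Let `k` be a field of characteristic 0 and `m, n ≥ 1`.  Then
`dim_k A(m,n) = m^n` and the Hilbert polynomial of `A(m,n)` is
`p(A(m,n),t) = Π_{i=1}^n (1 − t^{im})/(1 − t^i)
            = Π_{i=1}^n (1 + t^i + t^{2i} + ⋯ + t^{(m−1)i})`,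
i.e. the coefficient of `t^d` is the number of tuples `(c_1, …, c_n)` with
`0 ≤ c_i ≤ m − 1` and `Σ i·c_i = d`. -/
theorem Amn_dim_and_hilbert_polynomial
    (k : Type) [Field k] [CharZero k] (m n : ℕ) (hm : 1 ≤ m) (hn : 1 ≤ n) :
    Module.finrank k (Amn k n m) = m ^ n ∧
    ∀ d : ℕ, Module.finrank k (AmnGrading k n m d) =
      ((Finset.univ : Finset (Fin n → Fin m)).filter
        (fun c => ∑ i : Fin n, ((i : ℕ) + 1) * ((c i : ℕ)) = d)).card := by
  constructor
  · rw [Module.finrank_eq_card_basis (Module.Basis.mk (AmnProof.v_linearIndependent k hm)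
      (AmnProof.v_span k hm))]
    simp
  · intro d
    rw [AmnProof.grading_eq k hm d]
    refine (finrank_span_eq_card
      ((AmnProof.v_linearIndependent k hm).comp _ Subtype.val_injective)).trans ?_
    exact Fintype.card_subtype _
end

section
/- Let k be a field of characteristic 0, let A = k[x,y]/(x^2, xy, y^4) with the standard grading and B = k[w,z]/(w^2, wz, z^4) graded with weights w(w) = 2, w(z) = 1, and let C = A ⊗_k B. Then H(A) = (1,2,1,1), H(B) = (1,1,2,1), x + y ∈ A_1 is a strong Lefschetz element of A with Jordan type (4,1), z ∈ B_1 is a strong Lefschetz element of B with Jordan type (4,1), H(C) = (1,3,5,7,5,3,1) with H(C)^∨ = (7,5,5,3,3,1,1), but the linear form ℓ = (x+y) ⊗ 1 + 1 ⊗ z ∈ C_1 has Jordan type P_ℓ = (7,5,4,4,3,1,1) ≠ H(C)^∨; in particular ℓ is not a strong Lefschetz element of C, even though its two components are strong Lefschetz for A and B. -/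
/-!
Both factors have the same shape: with `u = x + y` in `A` and `u = z` in `B`, and `x` standing for
the remaining variable, the elements `1, u, u², u³, x` form a basis of homogeneous elements and
`u x = 0`, `u⁴ = 0` (`exists_basis`). Hence multiplication by `u` has one string of length four,
starting at `1`, and one of length one, `x` alone. The two gradings differ only in the degree of
`x`, so all Hilbert functions are obtained by counting basis elements of a given degree.

Jordan types are read off from strings `v, f v, f² v, …`: if the last nonzero vectors of a family of
strings are linearly independent and the lengths add up to the dimension, then the lengths are the
Jordan type (`isJordanTypeOf_of_strings`). On `A ⊗ B`, with `U = u ⊗ 1` and `Z = 1 ⊗ z`, the product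
of the two strings of length four splits, in characteristic zero, into strings of lengths
`7, 5, 3, 1`, starting at `1`, `U - Z`, `3U² - 4UZ + 3Z²` and `U³ - U²Z + UZ² - Z³`; the other
strings start at `x ⊗ 1`, `1 ⊗ w` (length four) and `x ⊗ w` (length one).

The strong Lefschetz property fails from degree one to degree five: both components have
dimension three, but `ℓ⁴ (x ⊗ 1) = x ⊗ z⁴ = 0`.
-/

/-- `P` is the Jordan type (multiset of Jordan block sizes) of the `k`-linear
endomorphism `f`, characterized by the ranks of the powers of `f`. -/
def IsJordanTypeOf {k A : Type*} [Field k] [AddCommGroup A] [Module k A]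
    (f : A →ₗ[k] A) (P : Multiset ℕ) : Prop :=
  (∀ p ∈ P, 0 < p) ∧
  ∀ j : ℕ, Module.finrank k (LinearMap.range (f ^ j)) = (P.map (fun p => p - j)).sum

/-- The conjugate partition of a Hilbert function `H` (whose values are bounded
by `n`): its `i`-th part (for `1 ≤ i ≤ n`) is `#{d | H d ≥ i}`; zero parts are
discarded. -/
noncomputable def conjHilb (H : ℕ → ℕ) (n : ℕ) : Multiset ℕ :=
  ((Multiset.range n).map (fun i => Set.ncard {d : ℕ | i + 1 ≤ H d})).filter (fun c => 0 < c)

/-- A linear form `ℓ` is strong Lefschetz for the graded algebra `A` with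
grading `𝒜` if `ℓ ∈ 𝒜 1` and all multiplication maps `×ℓ^j : 𝒜 i → 𝒜 (i+j)`
have maximal rank. -/
def IsSL {k A : Type*} [Field k] [CommRing A] [Algebra k A]
    (𝒜 : ℕ → Submodule k A) (ℓ : A) : Prop :=
  ℓ ∈ 𝒜 1 ∧ ∀ i j : ℕ,
    Module.finrank k ((𝒜 i).map (LinearMap.mulLeft k (ℓ ^ j))) =
      min (Module.finrank k (𝒜 i)) (Module.finrank k (𝒜 (i + j)))

open TensorProduct

/-- The grading on the tensor product `C = A ⊗_k B` of two graded algebras: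
`C_d = ⊕_{i+j=d} A_i ⊗ B_j`. -/
noncomputable def tensorGrading {k A B : Type*} [Field k]
    [CommRing A] [Algebra k A] [CommRing B] [Algebra k B]
    (𝒜 : ℕ → Submodule k A) (ℬ : ℕ → Submodule k B) (d : ℕ) :
    Submodule k (A ⊗[k] B) :=
  ⨆ (p : ℕ × ℕ) (_ : p.1 + p.2 = d),
    Submodule.map₂ (TensorProduct.mk k A B) (𝒜 p.1) (ℬ p.2)

open MvPolynomial

set_option maxHeartbeats 2000000
set_option synthInstance.maxHeartbeats 1000000

/-! ### Jordan types from strings -/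

section Strings

variable {k V : Type*} [Field k] [AddCommGroup V] [Module k V]

/-- Strings of a linear map whose last vectors are linearly independent are jointly linearly
independent: applying a suitable power of `f` to a relation leaves only last vectors. -/
theorem string_linearIndependent {r : ℕ} (f : V →ₗ[k] V) (v : Fin r → V) (p : Fin r → ℕ)
    (hv : ∀ s, (f ^ p s) (v s) = 0)
    (hli : LinearIndependent k (fun s => (f ^ (p s - 1)) (v s))) :
    LinearIndependent k (fun q : (s : Fin r) × Fin (p s) => (f ^ (q.2 : ℕ)) (v q.1)) := by
  have hz : ∀ s m, p s ≤ m → (f ^ m) (v s) = 0 := by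
    intro s m hm
    obtain ⟨t, rfl⟩ := Nat.exists_eq_add_of_le hm
    rw [add_comm, pow_add, Module.End.mul_apply, hv, map_zero]
  rw [Fintype.linearIndependent_iff]
  intro g hg
  -- Descending induction on the distance `p s - 1 - i` of `f ^ i (v s)` to the end of its string.
  have key : ∀ n m : ℕ, ∀ q : (s : Fin r) × Fin (p s),
      (∑ s, p s) ≤ n + m → m ≤ p q.1 - 1 - q.2 → g q = 0 := by
    intro n
    induction n with
    | zero =>
      intro m q h1 h2
      have h3 := Finset.single_le_sum (f := p) (fun _ _ => Nat.zero_le _) (Finset.mem_univ q.1)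
      have := q.2.2
      omega
    | succ n ih =>
      intro m q h1 h2
      by_cases hq : m + 1 ≤ p q.1 - 1 - q.2
      · exact ih (m + 1) q (by omega) hq
      have hq2 := q.2.2
      have hsum : ∑ s : Fin r, (if h : m < p s then g ⟨s, ⟨p s - 1 - m, by omega⟩⟩ else 0) •
          (f ^ (p s - 1)) (v s) = 0 := by
        have h0 := congrArg (f ^ m) hg
        rw [map_sum, map_zero, Fintype.sum_sigma] at h0
        rw [← h0]
        refine Finset.sum_congr rfl fun s _ => ?_
        simp only [map_smul, ← Module.End.mul_apply, ← pow_add]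
        split_ifs with h
        · rw [Finset.sum_eq_single (⟨p s - 1 - m, by omega⟩ : Fin (p s))]
          · congr 3
            simp only
            omega
          · intro i _ hi
            have hi' : (i : ℕ) ≠ p s - 1 - m := fun e => hi (Fin.ext e)
            have := i.2
            rcases lt_or_ge (p s) (m + i + 1) with hlt | hge
            · rw [hz s (m + i) (by omega), smul_zero]
            · rw [ih (m + 1) ⟨s, i⟩ (by omega) (by change m + 1 ≤ p s - 1 - (i : ℕ); omega), zero_smul]
          · simp
        · symm
          rw [zero_smul]
          exact Finset.sum_eq_zero fun i _ => by rw [hz s (m + i) (by omega), smul_zero]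
      have := Fintype.linearIndependent_iff.1 hli _ hsum q.1
      rw [dif_pos (by omega)] at this
      have hq' : q = ⟨q.1, ⟨p q.1 - 1 - m, by omega⟩⟩ := by
        obtain ⟨s, i⟩ := q
        have e : (i : ℕ) = p s - 1 - m := by
          change ¬ m + 1 ≤ p s - 1 - (i : ℕ) at hq
          change m ≤ p s - 1 - (i : ℕ) at h2
          omega
        exact congrArg (Sigma.mk s) (Fin.ext e)
      rw [hq']
      exact this
  intro q
  exact key (∑ s, p s) 0 q (by omega) (by omega)

/-- If strings with independent last vectors fill the space, their lengths are the Jordan type: the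
range of `f ^ j` has as basis the vectors at position at least `j` in their string. -/
theorem isJordanTypeOf_of_strings {r : ℕ} [FiniteDimensional k V] (f : V →ₗ[k] V)
    (v : Fin r → V) (p : Fin r → ℕ) (hp : ∀ s, 0 < p s) (hv : ∀ s, (f ^ p s) (v s) = 0)
    (hli : LinearIndependent k (fun s => (f ^ (p s - 1)) (v s)))
    (hdim : Module.finrank k V = ∑ s, p s) :
    IsJordanTypeOf f (Finset.univ.val.map p) := by
  have hz : ∀ s m, p s ≤ m → (f ^ m) (v s) = 0 := by
    intro s m hm
    obtain ⟨t, rfl⟩ := Nat.exists_eq_add_of_le hm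
    rw [add_comm, pow_add, Module.End.mul_apply, hv, map_zero]
  have hind := string_linearIndependent f v p hv hli
  have hspan := hind.span_eq_top_of_card_eq_finrank' (by simp [hdim])
  refine ⟨by simpa using hp, fun j => ?_⟩
  have hrange : LinearMap.range (f ^ j) = Submodule.span k (Set.range
      (fun q : (s : Fin r) × Fin (p s - j) => (f ^ ((q.2 : ℕ) + j)) (v q.1))) := by
    rw [LinearMap.range_eq_map, ← hspan, Submodule.map_span]
    apply le_antisymm
    · rw [Submodule.span_le]
      rintro _ ⟨_, ⟨⟨s, i⟩, rfl⟩, rfl⟩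
      simp only [← Module.End.mul_apply, ← pow_add, SetLike.mem_coe]
      rcases lt_or_ge (j + i) (p s) with h | h
      · refine Submodule.subset_span ⟨⟨s, ⟨i, by omega⟩⟩, ?_⟩
        simp only [add_comm]
      · rw [hz _ _ h]; exact Submodule.zero_mem _
    · rw [Submodule.span_le]
      rintro _ ⟨⟨s, i⟩, rfl⟩
      refine Submodule.subset_span ⟨_, ⟨⟨s, ⟨i, by omega⟩⟩, rfl⟩, ?_⟩
      simp only [← Module.End.mul_apply, ← pow_add, add_comm]
  have hind' : LinearIndependent k
      (fun q : (s : Fin r) × Fin (p s - j) => (f ^ ((q.2 : ℕ) + j)) (v q.1)) := by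
    refine hind.comp (fun q : (s : Fin r) × Fin (p s - j) =>
      (⟨q.1, ⟨q.2 + j, by have := q.2.2; omega⟩⟩ : (s : Fin r) × Fin (p s))) ?_
    rintro ⟨s, i⟩ ⟨t, i'⟩ h
    simp only [Sigma.mk.injEq] at h
    obtain ⟨rfl, h⟩ := h
    simp only [heq_eq_eq, Fin.mk.injEq] at h
    congr 1
    ext
    omega
  rw [hrange, finrank_span_eq_card hind', Multiset.map_map]
  simp only [Fintype.card_sigma, Fintype.card_fin]
  rfl

end Strings

/-! ### The ring `k[x,y]/(x², xy, y⁴)` -/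

section Quotient

variable {k R : Type*} [Field k] [CommRing R] [Algebra k R]

theorem span_eq_monomial_image : (Ideal.span {X 0 ^ 2, X 0 * X 1, X 1 ^ 4} :
    Ideal (MvPolynomial (Fin 2) k)) = Ideal.span ((fun s => monomial s (1 : k)) ''
      {Finsupp.single 0 2, Finsupp.single 0 1 + Finsupp.single 1 1, Finsupp.single 1 4}) := by
  simp [Set.image_insert_eq, X, monomial_mul, monomial_pow]

/-- Structure of the quotient `R` of `k[x,y]` by `(x², xy, y⁴)`. The parameter `ε` is the coefficient
of `x` in `u = εx + y`; it is `1` for the standard grading and `0` when `x` has weight `2`. The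
condition `hε` says that `u` is homogeneous of degree one. -/
theorem exists_basis (π : MvPolynomial (Fin 2) k →ₐ[k] R)
    (hπ : Function.Surjective π)
    (hker : ∀ f, π f = 0 ↔ f ∈ Ideal.span {X 0 ^ 2, X 0 * X 1, X 1 ^ 4}) (ε : k)
    (u x : R) (hx : x = π (X 0))
    (hu : u = π (ε • X 0 + X 1)) (w : Fin 2 → ℕ) (hw : w 1 = 1)
    (hε : ε = 0 ∨ w 0 = 1) :
    u * x = 0 ∧ u ^ 4 = 0 ∧
    ∃ b : Module.Basis (Fin 5) k R,
      (⇑b = ![1, u, u ^ 2, u ^ 3, x]) ∧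
      ∀ d, Submodule.span k
        (π '' {f | f.IsWeightedHomogeneous w d}) =
        Submodule.span k (b '' {i | ![0, 1, 2, 3, w 0] i = d}) := by
  set y : R := π (X 1) with hy
  have hxx : x * x = 0 := by
    rw [hx, ← map_mul, hker, ← pow_two]
    exact Ideal.subset_span (by simp)
  have hxy : x * y = 0 := by
    rw [hx, hy, ← map_mul, hker]
    exact Ideal.subset_span (by simp)
  have hy4 : y ^ 4 = 0 := by
    rw [hy, ← map_pow, hker]
    exact Ideal.subset_span (by simp)
  have hu' : u = ε • x + y := by
    rw [hu, hx, hy, map_add, map_smul]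
  have hux : u * x = 0 := by
    rw [hu', add_mul, smul_mul_assoc, hxx, mul_comm y, hxy, smul_zero, add_zero]
  have hyx : y * x = 0 := by rw [mul_comm, hxy]
  have huy : ∀ n, u ^ (n + 2) = y ^ (n + 2) := by
    intro n
    induction n with
    | zero => simp [hu', pow_two, add_mul, mul_add, hxx, hxy, hyx]
    | succ n ih =>
      rw [pow_succ, ih, hu', mul_add, pow_succ y (n + 1), mul_smul_comm, mul_assoc, hyx]
      simp [pow_succ]
  have hu4 : u ^ 4 = 0 := (huy 2).trans hy4
  have hli2 : LinearIndependent k ![u ^ 3, x] := by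
    rw [LinearIndependent.pair_iff]
    intro s t hst
    rw [huy 1, hx, hy, ← map_pow] at hst
    have hst' : π (s • X 1 ^ 3 + t • X 0) = 0 := by
      rw [map_add, map_smul, map_smul]; exact hst
    rw [hker, span_eq_monomial_image,
      mem_ideal_span_monomial_image] at hst'
    have h1 := hst' (Finsupp.single 1 3)
    have h2 := hst' (Finsupp.single 0 1)
    have e : (Finsupp.single (1 : Fin 2) 1 : Fin 2 →₀ ℕ) ≠ Finsupp.single 0 1 := by
      intro h; simpa using DFunLike.congr_fun h 0
    simp [X, monomial_pow, coeff_monomial, Finsupp.le_def,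
      Finsupp.single_eq_single_iff] at h1 h2
    exact ⟨h1, h2⟩
  have hmul : ∀ j, (LinearMap.mulLeft k u) ^ j = LinearMap.mulLeft k (u ^ j) :=
    fun j => LinearMap.pow_mulLeft k R u j
  have hli : LinearIndependent k ![1, u, u ^ 2, u ^ 3, x] := by
    have := string_linearIndependent (LinearMap.mulLeft k u) ![1, x] ![4, 1]
      (by intro s; fin_cases s <;> simp [hmul, hu4, hux])
      (by
        have e : (fun s => (LinearMap.mulLeft k u ^ ((![4, 1] : Fin 2 → ℕ) s - 1))
            ((![1, x] : Fin 2 → R) s)) = ![u ^ 3, x] := by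
          ext s; fin_cases s <;> simp [hmul]
        rw [e]
        exact hli2)
    have h2 := this.comp (![⟨0, ⟨0, by simp⟩⟩, ⟨0, ⟨1, by simp⟩⟩, ⟨0, ⟨2, by simp⟩⟩,
      ⟨0, ⟨3, by simp⟩⟩, ⟨1, ⟨0, by simp⟩⟩] : Fin 5 → (s : Fin 2) × Fin (![4, 1] s))
      (by decide)
    have e : ![1, u, u ^ 2, u ^ 3, x] =
        (fun q : (s : Fin 2) × Fin (![4, 1] s) =>
          (LinearMap.mulLeft k u ^ (q.2 : ℕ)) ((![1, x] : Fin 2 → R) q.1)) ∘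
        ![⟨0, ⟨0, by simp⟩⟩, ⟨0, ⟨1, by simp⟩⟩, ⟨0, ⟨2, by simp⟩⟩,
          ⟨0, ⟨3, by simp⟩⟩, ⟨1, ⟨0, by simp⟩⟩] := by
      ext i
      fin_cases i <;> simp [hmul]
    rw [e]
    exact h2
  have hsp : ⊤ ≤ Submodule.span k (Set.range ![1, u, u ^ 2, u ^ 3, x]) := by
    have hmem : ∀ i, ![1, u, u ^ 2, u ^ 3, x] i ∈
        Submodule.span k (Set.range ![1, u, u ^ 2, u ^ 3, x]) :=
      fun i => Submodule.subset_span ⟨i, rfl⟩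
    have hxm : x ∈ Submodule.span k (Set.range ![1, u, u ^ 2, u ^ 3, x]) := hmem 4
    have hcx : ∀ a ∈ Submodule.span k (Set.range ![1, u, u ^ 2, u ^ 3, x]),
        a * x ∈ Submodule.span k (Set.range ![1, u, u ^ 2, u ^ 3, x]) := by
      intro a ha
      induction ha using Submodule.span_induction with
      | mem a h =>
        obtain ⟨i, rfl⟩ := h
        fin_cases i
        · simpa using hxm
        all_goals simp [hux, hxx, pow_succ, mul_assoc]
      | zero => simp
      | add a b _ _ ha hb => rw [add_mul]; exact Submodule.add_mem _ ha hb
      | smul c a _ ha => rw [smul_mul_assoc]; exact Submodule.smul_mem _ c ha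
    have hcu : ∀ a ∈ Submodule.span k (Set.range ![1, u, u ^ 2, u ^ 3, x]),
        a * u ∈ Submodule.span k (Set.range ![1, u, u ^ 2, u ^ 3, x]) := by
      intro a ha
      induction ha using Submodule.span_induction with
      | mem a h =>
        obtain ⟨i, rfl⟩ := h
        fin_cases i
        · simpa using hmem 1
        · simpa [pow_two] using hmem 2
        · simpa [pow_succ] using hmem 3
        · simp [← pow_succ, hu4]
        · simp [mul_comm x, hux]
      | zero => simp
      | add a b _ _ ha hb => rw [add_mul]; exact Submodule.add_mem _ ha hb
      | smul c a _ ha => rw [smul_mul_assoc]; exact Submodule.smul_mem _ c ha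
    rintro a -
    obtain ⟨f, rfl⟩ := hπ a
    induction f using MvPolynomial.induction_on with
    | C c =>
      have : π (C c) = c • 1 := by
        rw [← map_one π, C_eq_smul_one, map_smul]
      rw [this]
      exact Submodule.smul_mem _ c (hmem 0)
    | add f g hf hg => rw [map_add]; exact Submodule.add_mem _ hf hg
    | mul_X f i hf =>
      rw [map_mul]
      fin_cases i
      · simpa [← hx] using hcx _ hf
      · have : π f * y = π f * u -
            ε • (π f * x) := by
          rw [hu', mul_add, mul_smul_comm]; ring
        simp only [Fin.mk_one]
        rw [← hy, this]
        exact Submodule.sub_mem _ (hcu _ hf) (Submodule.smul_mem _ _ (hcx _ hf))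
  refine ⟨hux, hu4, Module.Basis.mk hli hsp, Module.Basis.coe_mk hli hsp, fun d => ?_⟩
  rw [Module.Basis.coe_mk]
  have hmem : ∀ i, ![0, 1, 2, 3, w 0] i = d → ![1, u, u ^ 2, u ^ 3, x] i ∈
      Submodule.span k (![1, u, u ^ 2, u ^ 3, x] '' {i | ![0, 1, 2, 3, w 0] i = d}) :=
    fun i hi => Submodule.subset_span ⟨i, hi, rfl⟩
  apply le_antisymm
  · rw [Submodule.span_le]
    rintro _ ⟨f, hf, rfl⟩
    rw [← f.support_sum_monomial_coeff, map_sum]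
    refine Submodule.sum_mem _ fun m hm => ?_
    have hwt := hf (mem_support_iff.1 hm)
    have hmon : π (monomial m (coeff m f)) =
        coeff m f • (x ^ m 0 * y ^ m 1) := by
      rw [hx, hy, ← map_pow, ← map_pow, ← map_mul, monomial_eq, Finsupp.prod_fintype _ _ (by simp),
        Fin.prod_univ_two, C_mul', map_smul]
    rw [hmon]
    refine Submodule.smul_mem _ _ ?_
    have hwt' : m 0 * w 0 + m 1 = d := by
      rw [← hwt, Finsupp.weight_apply, Finsupp.sum_fintype _ _ (by simp), Fin.sum_univ_two]
      simp [hw]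
    generalize m 0 = a at hwt'
    generalize m 1 = b at hwt'
    match a, b with
    | a + 2, b =>
      have : x ^ (a + 2) * y ^ b = x * x * (x ^ a * y ^ b) := by ring
      rw [this, hxx, zero_mul]; exact Submodule.zero_mem _
    | 1, b + 1 =>
      have : x ^ 1 * y ^ (b + 1) = x * y * y ^ b := by ring
      rw [this, hxy, zero_mul]; exact Submodule.zero_mem _
    | 1, 0 => simpa using hmem 4 (by simpa using hwt')
    | 0, 0 => simpa using hmem 0 (by simpa using hwt')
    | 0, 1 =>
      have hy' : x ^ 0 * y ^ 1 = u - ε • x := by rw [hu']; simp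
      rw [hy']
      refine Submodule.sub_mem _ (hmem 1 (by simpa using hwt')) ?_
      rcases hε with h | h
      · simp [h]
      · exact Submodule.smul_mem _ _ (hmem 4 (by simpa [h] using hwt'))
    | 0, 2 => simpa [← huy 0] using hmem 2 (by simpa using hwt')
    | 0, 3 => simpa [← huy 1] using hmem 3 (by simpa using hwt')
    | 0, b + 4 =>
      have : x ^ 0 * y ^ (b + 4) = y ^ 4 * y ^ b := by ring
      rw [this, hy4, zero_mul]; exact Submodule.zero_mem _
  · rw [Submodule.span_le]
    have hX : ∀ i, (X i : MvPolynomial (Fin 2) k).IsWeightedHomogeneous w (w i) :=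
      fun i => isWeightedHomogeneous_X k w i
    have hU : (ε • X 0 + X 1 : MvPolynomial (Fin 2) k).IsWeightedHomogeneous w 1 := by
      refine IsWeightedHomogeneous.add ?_ (by simpa [hw] using hX 1)
      rcases hε with h | h
      · rw [h, zero_smul]; exact isWeightedHomogeneous_zero k w 1
      · rw [smul_eq_C_mul]
        simpa [h] using (isWeightedHomogeneous_C w ε).mul (hX 0)
    have hUn : ∀ n, (u ^ n) ∈ Submodule.span k
        (π '' {f | f.IsWeightedHomogeneous w n}) := fun n =>
      Submodule.subset_span ⟨(ε • X 0 + X 1) ^ n, by simpa using hU.pow n, by rw [map_pow, hu]⟩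
    rintro _ ⟨i, rfl, rfl⟩
    fin_cases i
    · simpa using hUn 0
    · simpa using hUn 1
    · exact hUn 2
    · exact hUn 3
    · exact Submodule.subset_span ⟨X 0, hX 0, hx.symm⟩

end Quotient

/-! ### The two factors -/

section Factor

variable {k R : Type*} [Field k] [CommRing R] [Algebra k R]

theorem finrank_span_basis_image {ι V : Type*} [Fintype ι] [AddCommGroup V] [Module k V]
    (b : Module.Basis ι k V) (P : ι → Prop) [DecidablePred P] :
    Module.finrank k (Submodule.span k (b '' {i | P i})) = (Finset.univ.filter P).card := by
  have h : LinearIndependent k (fun i : {i // P i} => b i) :=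
    b.linearIndependent.comp _ Subtype.val_injective
  have e : b '' {i | P i} = Set.range (fun i : {i // P i} => b i) := by
    ext v; simp
  rw [e, finrank_span_eq_card h, Fintype.card_subtype]

theorem factor_isJordanTypeOf (u x : R) (hux : u * x = 0) (hu4 : u ^ 4 = 0)
    (b : Module.Basis (Fin 5) k R) (hb : ⇑b = ![1, u, u ^ 2, u ^ 3, x]) :
    IsJordanTypeOf (LinearMap.mulLeft k u) ({4, 1} : Multiset ℕ) := by
  have hmul : ∀ j, (LinearMap.mulLeft k u) ^ j = LinearMap.mulLeft k (u ^ j) :=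
    fun j => LinearMap.pow_mulLeft k R u j
  have : FiniteDimensional k R := b.finiteDimensional_of_finite
  refine isJordanTypeOf_of_strings (LinearMap.mulLeft k u) ![1, x] ![4, 1] (by decide)
    (by intro s; fin_cases s <;> simp [hmul, hu4, hux]) ?_ ?_
  · have e : (fun s => (LinearMap.mulLeft k u ^ ((![4, 1] : Fin 2 → ℕ) s - 1))
        ((![1, x] : Fin 2 → R) s)) = ⇑b ∘ ![3, 4] := by
      ext s; fin_cases s <;> simp [hmul, hb]
    rw [e]
    exact b.linearIndependent.comp _ (by decide)
  · rw [Module.finrank_eq_card_basis b]; rfl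

/-- In both gradings (`x` of degree `c = 1` or `c = 2`) the element `u` is strong Lefschetz. -/
theorem factor_isSL (u x : R) (hux : u * x = 0) (hu4 : u ^ 4 = 0)
    (b : Module.Basis (Fin 5) k R) (hb : ⇑b = ![1, u, u ^ 2, u ^ 3, x]) (c : ℕ)
    (hc : c = 1 ∨ c = 2) (𝒜 : ℕ → Submodule k R)
    (h𝒜 : ∀ d, 𝒜 d = Submodule.span k (b '' {i | ![0, 1, 2, 3, c] i = d})) :
    IsSL 𝒜 u := by
  have : FiniteDimensional k R := b.finiteDimensional_of_finite
  have hmem : ∀ i, b i ∈ 𝒜 (![0, 1, 2, 3, c] i) := fun i => by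
    rw [h𝒜]; exact Submodule.subset_span ⟨i, rfl, rfl⟩
  have hpow : ∀ n, u ^ n ∈ 𝒜 n := by
    intro n
    match n with
    | 0 => simpa [hb] using hmem 0
    | 1 => simpa [hb] using hmem 1
    | 2 => simpa [hb] using hmem 2
    | 3 => simpa [hb] using hmem 3
    | n + 4 => rw [pow_add, hu4, mul_zero]; exact Submodule.zero_mem _
  have hdim : ∀ d, Module.finrank k (𝒜 d) =
      (Finset.univ.filter fun i : Fin 5 => ![0, 1, 2, 3, c] i = d).card := fun d => by
    rw [h𝒜, finrank_span_basis_image]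
  have hmap : ∀ i j, (𝒜 i).map (LinearMap.mulLeft k (u ^ j)) ≤ 𝒜 (i + j) := by
    intro i j
    rw [h𝒜 i, Submodule.map_span, Submodule.span_le]
    rintro _ ⟨_, ⟨s, hs, rfl⟩, rfl⟩
    simp only [LinearMap.mulLeft_apply, SetLike.mem_coe]
    rcases Nat.eq_zero_or_pos j with rfl | hj
    · rw [pow_zero, one_mul, ← hs]; exact hmem s
    · obtain ⟨j, rfl⟩ := Nat.exists_eq_succ_of_ne_zero hj.ne'
      have hz : u ^ (j + 1) * x = 0 := by rw [pow_succ, mul_assoc, hux, mul_zero]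
      fin_cases s <;> simp at hs <;> simp only [hb] <;> simp [← hs, hz]
      · simpa [← hs] using hpow (j + 1)
      · rw [← pow_succ, add_comm 1]; exact hpow _
      · rw [← pow_add, add_comm 2]; exact hpow _
      · rw [← pow_add, add_comm 3]; exact hpow _
  refine ⟨by simpa using hpow 1, fun i j => ?_⟩
  rcases Nat.eq_zero_or_pos j with rfl | hj
  · have : LinearMap.mulLeft k (u ^ 0) = LinearMap.id := by ext; simp
    rw [this, Submodule.map_id]; simp
  refine le_antisymm (le_min (Submodule.finrank_map_le _ _)
    (Submodule.finrank_mono (hmap i j))) ?_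
  -- Two different degrees never both have dimension two, so a nonzero image suffices.
  rcases lt_or_ge (i + j) 4 with hij | hij
  · have h1 : min (Module.finrank k (𝒜 i)) (Module.finrank k (𝒜 (i + j))) ≤ 1 := by
      rw [hdim, hdim]
      have hi : i < 4 := by omega
      have hj' : j < 4 := by omega
      rcases hc with rfl | rfl <;> interval_cases i <;> interval_cases j <;>
        first | omega | decide
    refine h1.trans ?_
    rw [Nat.one_le_iff_ne_zero, Submodule.finrank_eq_zero.ne, Submodule.ne_bot_iff]
    refine ⟨u ^ (i + j), ⟨u ^ i, hpow i, by simp [← pow_add, add_comm]⟩, fun h0 => ?_⟩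
    have : b 3 = 0 := by
      rw [hb]
      have h3 : 3 = (i + j) + (3 - (i + j)) := by omega
      change u ^ 3 = 0
      rw [h3, pow_add, h0, zero_mul]
    exact b.ne_zero 3 this
  · have h0 : Module.finrank k (𝒜 (i + j)) = 0 := by
      rw [hdim, Finset.card_eq_zero, Finset.filter_eq_empty_iff]
      intro s _
      fin_cases s <;> simp <;> omega
    rw [h0]; simp

end Factor

/-! ### The tensor product -/

section Tensor

variable {k R S : Type*} [Field k] [CommRing R] [Algebra k R] [CommRing S] [Algebra k S]

theorem tensorGrading_eq_span {ι κ : Type*} (a : Module.Basis ι k R)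
    (b : Module.Basis κ k S) (α : ι → ℕ) (β : κ → ℕ)
    (𝒜 : ℕ → Submodule k R) (h𝒜 : ∀ d, 𝒜 d = Submodule.span k (a '' {i | α i = d}))
    (ℬ : ℕ → Submodule k S) (hℬ : ∀ d, ℬ d = Submodule.span k (b '' {i | β i = d})) (d : ℕ) :
    tensorGrading 𝒜 ℬ d =
      Submodule.span k ((a.tensorProduct b) '' {q | α q.1 + β q.2 = d}) := by
  simp only [tensorGrading, h𝒜, hℬ, Submodule.map₂_span_span]
  apply le_antisymm
  · refine iSup₂_le fun q hq => Submodule.span_mono ?_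
    rintro _ ⟨_, ⟨i, hi, rfl⟩, _, ⟨j, hj, rfl⟩, rfl⟩
    refine ⟨(i, j), ?_, by simp⟩
    simp only [Set.mem_ofPred_eq] at *
    omega
  · rw [Submodule.span_le]
    rintro _ ⟨⟨i, j⟩, h, rfl⟩
    refine Submodule.mem_iSup_of_mem (α i, β j) (Submodule.mem_iSup_of_mem h ?_)
    exact Submodule.subset_span ⟨a i, ⟨i, rfl, rfl⟩, b j, ⟨j, rfl, rfl⟩, by simp⟩

theorem tensor_isJordanTypeOf [CharZero k] (u x : R) (hux : u * x = 0) (hu4 : u ^ 4 = 0)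
    (a : Module.Basis (Fin 5) k R) (ha : ⇑a = ![1, u, u ^ 2, u ^ 3, x])
    (z w : S) (hzw : z * w = 0) (hz4 : z ^ 4 = 0)
    (b : Module.Basis (Fin 5) k S) (hb : ⇑b = ![1, z, z ^ 2, z ^ 3, w]) :
    IsJordanTypeOf (LinearMap.mulLeft k (u ⊗ₜ[k] (1 : S) + (1 : R) ⊗ₜ[k] z))
      ({7, 5, 4, 4, 3, 1, 1} : Multiset ℕ) := by
  set U : R ⊗[k] S := u ⊗ₜ[k] 1 with hU
  set Z : R ⊗[k] S := 1 ⊗ₜ[k] z with hZ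
  set T : R ⊗[k] S := x ⊗ₜ[k] 1 with hT
  set W : R ⊗[k] S := 1 ⊗ₜ[k] w with hW
  have eU : U ^ 4 = 0 := by simp [hU, hu4]
  have eZ : Z ^ 4 = 0 := by simp [hZ, hz4]
  have eX : U * T = 0 := by simp [hU, hT, hux]
  have eW : Z * W = 0 := by simp [hZ, hW, hzw]
  set c := a.tensorProduct b with hc
  have : FiniteDimensional k (R ⊗[k] S) := c.finiteDimensional_of_finite
  have hmul : ∀ j, (LinearMap.mulLeft k (U + Z)) ^ j = LinearMap.mulLeft k ((U + Z) ^ j) :=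
    fun j => LinearMap.pow_mulLeft k (R ⊗[k] S) (U + Z) j
  have c33 : c (3, 3) = U ^ 3 * Z ^ 3 := by simp [hc, ha, hb, hU, hZ]
  have c32 : c (3, 2) = U ^ 3 * Z ^ 2 := by simp [hc, ha, hb, hU, hZ]
  have c23 : c (2, 3) = U ^ 2 * Z ^ 3 := by simp [hc, ha, hb, hU, hZ]
  have c31 : c (3, 1) = U ^ 3 * Z := by simp [hc, ha, hb, hU, hZ]
  have c22 : c (2, 2) = U ^ 2 * Z ^ 2 := by simp [hc, ha, hb, hU, hZ]
  have c13 : c (1, 3) = U * Z ^ 3 := by simp [hc, ha, hb, hU, hZ]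
  have c30 : c (3, 0) = U ^ 3 := by simp [hc, ha, hb, hU]
  have c21 : c (2, 1) = U ^ 2 * Z := by simp [hc, ha, hb, hU, hZ]
  have c12 : c (1, 2) = U * Z ^ 2 := by simp [hc, ha, hb, hU, hZ]
  have c03 : c (0, 3) = Z ^ 3 := by simp [hc, ha, hb, hZ]
  have c43 : c (4, 3) = T * Z ^ 3 := by simp [hc, ha, hb, hT, hZ]
  have c34 : c (3, 4) = U ^ 3 * W := by simp [hc, ha, hb, hU, hW]
  have c44 : c (4, 4) = T * W := by simp [hc, ha, hb, hT, hW]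
  have hP : ({7, 5, 4, 4, 3, 1, 1} : Multiset ℕ) =
      Finset.univ.val.map (![7, 5, 3, 1, 4, 4, 1] : Fin 7 → ℕ) := by decide
  rw [hP]
  -- For `i = 0, 1, 2, 3` the starting vector of degree `i` in `U, Z` spans the kernel of
  -- `ℓ ^ (7 - 2i)` on the degree `i` part of `k[U, Z] / (U⁴, Z⁴)`.
  refine isJordanTypeOf_of_strings _ ![1, U - Z, 3 * U ^ 2 - 4 * (U * Z) + 3 * Z ^ 2,
    U ^ 3 - U ^ 2 * Z + U * Z ^ 2 - Z ^ 3, T, W, T * W] _ (by decide) ?_ ?_ ?_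
  · intro s
    fin_cases s <;> simp only [hmul] <;> simp
    · linear_combination (U ^ 3 + 7 * U ^ 2 * Z + 21 * U * Z ^ 2 + 35 * Z ^ 3) * eU +
        (Z ^ 3 + 7 * Z ^ 2 * U + 21 * Z * U ^ 2 + 35 * U ^ 3) * eZ
    · linear_combination (U ^ 2 + 4 * U * Z + 5 * Z ^ 2) * eU -
        (Z ^ 2 + 4 * U * Z + 5 * U ^ 2) * eZ
    · linear_combination (3 * U + 5 * Z) * eU + (3 * Z + 5 * U) * eZ
    · linear_combination eU - eZ
    · linear_combination (U ^ 3 + 4 * U ^ 2 * Z + 6 * U * Z ^ 2 + 4 * Z ^ 3) * eX + T * eZ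
    · linear_combination (Z ^ 3 + 4 * Z ^ 2 * U + 6 * Z * U ^ 2 + 4 * U ^ 3) * eW + W * eU
    · linear_combination W * eX + T * eW
  · -- The last vectors of the strings; the first involves the binomial coefficient `20`, which is
    -- nonzero in `k`.
    have e : (fun s => (LinearMap.mulLeft k (U + Z) ^ ((![7, 5, 3, 1, 4, 4, 1] : Fin 7 → ℕ) s - 1))
        ((![1, U - Z, 3 * U ^ 2 - 4 * (U * Z) + 3 * Z ^ 2,
          U ^ 3 - U ^ 2 * Z + U * Z ^ 2 - Z ^ 3, T, W, T * W] : Fin 7 → R ⊗[k] S) s)) =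
        ![(20 : k) • c (3, 3), (2 : k) • c (3, 2) - (2 : k) • c (2, 3),
          (2 : k) • c (3, 1) - (2 : k) • c (2, 2) + (2 : k) • c (1, 3),
          c (3, 0) - c (2, 1) + c (1, 2) - c (0, 3), c (4, 3), c (3, 4), c (4, 4)] := by
      have h2 : ∀ v : R ⊗[k] S, (2 : k) • v = 2 * v := fun v => by
        rw [Algebra.smul_def, map_ofNat]
      have h20 : ∀ v : R ⊗[k] S, (20 : k) • v = 20 * v := fun v => by
        rw [Algebra.smul_def, map_ofNat]
      simp only [h2, h20, c33, c32, c23, c31, c22, c13, c30, c21, c12, c03, c43, c34, c44]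
      funext s
      fin_cases s <;> simp only [hmul] <;> simp
      · linear_combination (U ^ 2 + 6 * U * Z + 15 * Z ^ 2) * eU +
          (Z ^ 2 + 6 * Z * U + 15 * U ^ 2) * eZ
      · linear_combination (U + 3 * Z) * eU - (Z + 3 * U) * eZ
      · linear_combination 3 * eU + 3 * eZ
      · linear_combination (U ^ 2 + 3 * U * Z + 3 * Z ^ 2) * eX
      · linear_combination (Z ^ 2 + 3 * U * Z + 3 * U ^ 2) * eW
    rw [e, Fintype.linearIndependent_iff]
    intro g hg
    rw [Fin.sum_univ_seven] at hg
    have hr := fun q => DFunLike.congr_fun (congrArg c.repr hg) q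
    have r0 := hr (3, 3)
    have r1 := hr (3, 2)
    have r2 := hr (3, 1)
    have r3 := hr (3, 0)
    have r4 := hr (4, 3)
    have r5 := hr (3, 4)
    have r6 := hr (4, 4)
    clear_value c
    simp at r0 r1 r2 r3 r4 r5 r6
    intro s
    fin_cases s <;> assumption
  · rw [Module.finrank_eq_card_basis c]; rfl

theorem tensor_not_isSL (u x : R) (hux : u * x = 0)
    (a : Module.Basis (Fin 5) k R) (ha : ⇑a = ![1, u, u ^ 2, u ^ 3, x])
    (z w : S) (hz4 : z ^ 4 = 0)
    (b : Module.Basis (Fin 5) k S) (hb : ⇑b = ![1, z, z ^ 2, z ^ 3, w])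
    (𝒞 : ℕ → Submodule k (R ⊗[k] S))
    (h𝒞 : ∀ d, 𝒞 d = Submodule.span k ((a.tensorProduct b) ''
      {q | ![0, 1, 2, 3, 1] q.1 + ![0, 1, 2, 3, 2] q.2 = d}))
    (h15 : Module.finrank k (𝒞 1) = Module.finrank k (𝒞 5)) :
    ¬ IsSL 𝒞 (u ⊗ₜ[k] (1 : S) + (1 : R) ⊗ₜ[k] z) := by
  rintro ⟨-, h⟩
  have : FiniteDimensional k (R ⊗[k] S) := (a.tensorProduct b).finiteDimensional_of_finite
  have h1 := h 1 4
  rw [← h15, min_self] at h1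
  set g := LinearMap.mulLeft k ((u ⊗ₜ[k] (1 : S) + (1 : R) ⊗ₜ[k] z) ^ 4) with hg
  -- `x ⊗ 1` is a nonzero element of degree one killed by the fourth power of the linear form.
  have hmem : x ⊗ₜ[k] (1 : S) ∈ 𝒞 1 := by
    rw [h𝒞]
    exact Submodule.subset_span ⟨(4, 0), by simp, by simp [ha, hb]⟩
  have hne : x ⊗ₜ[k] (1 : S) ≠ 0 := by
    have := (a.tensorProduct b).ne_zero (4, 0)
    simpa [ha, hb] using this
  have hker : g (x ⊗ₜ[k] (1 : S)) = 0 := by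
    have eX : (u ⊗ₜ[k] (1 : S)) * (x ⊗ₜ[k] (1 : S)) = 0 := by simp [hux]
    have eZ : ((1 : R) ⊗ₜ[k] z) ^ 4 = 0 := by simp [hz4]
    rw [hg, LinearMap.mulLeft_apply]
    generalize u ⊗ₜ[k] (1 : S) = U at *
    generalize (1 : R) ⊗ₜ[k] z = Z at *
    generalize x ⊗ₜ[k] (1 : S) = T at *
    linear_combination (U ^ 3 + 4 * U ^ 2 * Z + 6 * U * Z ^ 2 + 4 * Z ^ 3) * eX + T * eZ
  have hrn := LinearMap.finrank_range_add_finrank_ker (g.domRestrict (𝒞 1))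
  rw [LinearMap.range_domRestrict, h1] at hrn
  have hk : Module.finrank k (LinearMap.ker (g.domRestrict (𝒞 1))) = 0 := by omega
  rw [Submodule.finrank_eq_zero] at hk
  have : (⟨_, hmem⟩ : 𝒞 1) ∈ LinearMap.ker (g.domRestrict (𝒞 1)) := hker
  rw [hk, Submodule.mem_bot] at this
  exact hne (congrArg Subtype.val this)

end Tensor

/-- (J. Watanabe's example.)  Let `k` be a field of characteristic 0, let
`A = k[x,y]/(x², xy, y⁴)` with the standard grading and
`B = k[w,z]/(w², wz, z⁴)` graded with weights `w(w) = 2`, `w(z) = 1`, and let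
`C = A ⊗_k B`.  Then `H(A) = (1,2,1,1)`, `H(B) = (1,1,2,1)`, `x + y ∈ A₁` is a
strong Lefschetz element of `A` with Jordan type `(4,1)`, `z ∈ B₁` is a strong
Lefschetz element of `B` with Jordan type `(4,1)`, `H(C) = (1,3,5,7,5,3,1)` with
`H(C)^∨ = (7,5,5,3,3,1,1)`, but `ℓ = (x+y) ⊗ 1 + 1 ⊗ z ∈ C₁` has Jordan type
`P_ℓ = (7,5,4,4,3,1,1) ≠ H(C)^∨`; in particular `ℓ` is not a strong Lefschetz
element of `C`, even though its two components are strong Lefschetz for `A` and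
`B`. -/
theorem watanabe_example
    {k : Type} [Field k] [CharZero k]
    (IA IB : Ideal (MvPolynomial (Fin 2) k))
    (hIA : IA = Ideal.span {X 0 ^ 2, X 0 * X 1, X 1 ^ 4})
    (hIB : IB = Ideal.span {X 0 ^ 2, X 0 * X 1, X 1 ^ 4})
    (𝒜 : ℕ → Submodule k (MvPolynomial (Fin 2) k ⧸ IA))
    (h𝒜 : ∀ d : ℕ, 𝒜 d = Submodule.span k
      ((Ideal.Quotient.mk IA) '' {f | f.IsHomogeneous d}))
    (ℬ : ℕ → Submodule k (MvPolynomial (Fin 2) k ⧸ IB))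
    (hℬ : ∀ d : ℕ, ℬ d = Submodule.span k
      ((Ideal.Quotient.mk IB) '' {f | f.IsWeightedHomogeneous ![2, 1] d})) :
    (Module.finrank k (𝒜 0) = 1 ∧ Module.finrank k (𝒜 1) = 2 ∧
     Module.finrank k (𝒜 2) = 1 ∧ Module.finrank k (𝒜 3) = 1 ∧
     ∀ d : ℕ, 4 ≤ d → Module.finrank k (𝒜 d) = 0) ∧
    (Module.finrank k (ℬ 0) = 1 ∧ Module.finrank k (ℬ 1) = 1 ∧
     Module.finrank k (ℬ 2) = 2 ∧ Module.finrank k (ℬ 3) = 1 ∧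
     ∀ d : ℕ, 4 ≤ d → Module.finrank k (ℬ d) = 0) ∧
    (IsSL 𝒜 (Ideal.Quotient.mk IA (X 0 + X 1)) ∧
      IsJordanTypeOf (LinearMap.mulLeft k (Ideal.Quotient.mk IA (X 0 + X 1)))
        ({4, 1} : Multiset ℕ)) ∧
    (IsSL ℬ (Ideal.Quotient.mk IB (X 1)) ∧
      IsJordanTypeOf (LinearMap.mulLeft k (Ideal.Quotient.mk IB (X 1)))
        ({4, 1} : Multiset ℕ)) ∧
    (Module.finrank k (tensorGrading 𝒜 ℬ 0) = 1 ∧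
     Module.finrank k (tensorGrading 𝒜 ℬ 1) = 3 ∧
     Module.finrank k (tensorGrading 𝒜 ℬ 2) = 5 ∧
     Module.finrank k (tensorGrading 𝒜 ℬ 3) = 7 ∧
     Module.finrank k (tensorGrading 𝒜 ℬ 4) = 5 ∧
     Module.finrank k (tensorGrading 𝒜 ℬ 5) = 3 ∧
     Module.finrank k (tensorGrading 𝒜 ℬ 6) = 1 ∧
     ∀ d : ℕ, 7 ≤ d → Module.finrank k (tensorGrading 𝒜 ℬ d) = 0) ∧
    conjHilb (fun d => Module.finrank k (tensorGrading 𝒜 ℬ d))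
        (Module.finrank k ((MvPolynomial (Fin 2) k ⧸ IA) ⊗[k] (MvPolynomial (Fin 2) k ⧸ IB)))
      = ({7, 5, 5, 3, 3, 1, 1} : Multiset ℕ) ∧
    IsJordanTypeOf (k := k)
      (LinearMap.mulLeft k
        ((Ideal.Quotient.mk IA (X 0 + X 1)) ⊗ₜ[k] (1 : MvPolynomial (Fin 2) k ⧸ IB) +
          (1 : MvPolynomial (Fin 2) k ⧸ IA) ⊗ₜ[k] (Ideal.Quotient.mk IB (X 1))))
      ({7, 5, 4, 4, 3, 1, 1} : Multiset ℕ) ∧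
    ({7, 5, 4, 4, 3, 1, 1} : Multiset ℕ) ≠ ({7, 5, 5, 3, 3, 1, 1} : Multiset ℕ) ∧
    ¬ IsSL (k := k) (tensorGrading 𝒜 ℬ)
      ((Ideal.Quotient.mk IA (X 0 + X 1)) ⊗ₜ[k] (1 : MvPolynomial (Fin 2) k ⧸ IB) +
        (1 : MvPolynomial (Fin 2) k ⧸ IA) ⊗ₜ[k] (Ideal.Quotient.mk IB (X 1))) := by
  have hkerA : ∀ f, Ideal.Quotient.mkₐ k IA f = 0 ↔
      f ∈ Ideal.span {X 0 ^ 2, X 0 * X 1, X 1 ^ 4} := fun f => by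
    rw [Ideal.Quotient.mkₐ_eq_mk, Ideal.Quotient.eq_zero_iff_mem, hIA]
  have hkerB : ∀ f, Ideal.Quotient.mkₐ k IB f = 0 ↔
      f ∈ Ideal.span {X 0 ^ 2, X 0 * X 1, X 1 ^ 4} := fun f => by
    rw [Ideal.Quotient.mkₐ_eq_mk, Ideal.Quotient.eq_zero_iff_mem, hIB]
  obtain ⟨hux, hu4, a, ha, hga⟩ := exists_basis (Ideal.Quotient.mkₐ k IA)
    (Ideal.Quotient.mkₐ_surjective k IA) hkerA 1 (Ideal.Quotient.mk IA (X 0 + X 1))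
    (Ideal.Quotient.mk IA (X 0)) rfl (by rw [one_smul]; rfl) 1 rfl (Or.inr rfl)
  obtain ⟨hzw, hz4, b, hb, hgb⟩ := exists_basis (Ideal.Quotient.mkₐ k IB)
    (Ideal.Quotient.mkₐ_surjective k IB) hkerB 0 (Ideal.Quotient.mk IB (X 1))
    (Ideal.Quotient.mk IB (X 0)) rfl (by rw [zero_smul, zero_add]; rfl) ![2, 1] rfl (Or.inl rfl)
  have hA : ∀ d, 𝒜 d = Submodule.span k (a '' {i | ![0, 1, 2, 3, 1] i = d}) :=
    fun d => (h𝒜 d).trans (hga d)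
  have hB : ∀ d, ℬ d = Submodule.span k (b '' {i | ![0, 1, 2, 3, 2] i = d}) :=
    fun d => (hℬ d).trans (hgb d)
  have hC := tensorGrading_eq_span a b _ _ 𝒜 hA ℬ hB
  have dA : ∀ d, Module.finrank k (𝒜 d) = [1, 2, 1, 1].getD d 0 := by
    intro d
    rw [hA, finrank_span_basis_image]
    match d with
    | 0 | 1 | 2 | 3 => decide
    | d + 4 =>
      simp only [List.getD_eq_default, List.length_cons, List.length_nil, Nat.le_add_left,
        Finset.card_eq_zero, Finset.filter_eq_empty_iff]
      intro s _
      fin_cases s <;> simp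
  have dB : ∀ d, Module.finrank k (ℬ d) = [1, 1, 2, 1].getD d 0 := by
    intro d
    rw [hB, finrank_span_basis_image]
    match d with
    | 0 | 1 | 2 | 3 => decide
    | d + 4 =>
      simp only [List.getD_eq_default, List.length_cons, List.length_nil, Nat.le_add_left,
        Finset.card_eq_zero, Finset.filter_eq_empty_iff]
      intro s _
      fin_cases s <;> simp
  have dC : ∀ d, Module.finrank k (tensorGrading 𝒜 ℬ d) =
      [1, 3, 5, 7, 5, 3, 1].getD d 0 := by
    intro d
    rw [hC, finrank_span_basis_image]
    match d with
    | 0 | 1 | 2 | 3 | 4 | 5 | 6 => decide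
    | d + 7 =>
      simp only [List.getD_eq_default, List.length_cons, List.length_nil, Nat.le_add_left,
        Finset.card_eq_zero, Finset.filter_eq_empty_iff]
      have h1 : ∀ s : Fin 5, (![0, 1, 2, 3, 1] : Fin 5 → ℕ) s ≤ 3 := by decide
      have h2 : ∀ s : Fin 5, (![0, 1, 2, 3, 2] : Fin 5 → ℕ) s ≤ 3 := by decide
      intro s _
      have := h1 s.1
      have := h2 s.2
      omega
  refine ⟨⟨dA 0, dA 1, dA 2, dA 3, fun d hd => ?_⟩, ⟨dB 0, dB 1, dB 2, dB 3, fun d hd => ?_⟩,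
    ⟨factor_isSL _ _ hux hu4 a ha 1 (Or.inl rfl) 𝒜 hA, factor_isJordanTypeOf _ _ hux hu4 a ha⟩,
    ⟨factor_isSL _ _ hzw hz4 b hb 2 (Or.inr rfl) ℬ hB, factor_isJordanTypeOf _ _ hzw hz4 b hb⟩,
    ⟨dC 0, dC 1, dC 2, dC 3, dC 4, dC 5, dC 6, fun d hd => ?_⟩, ?_,
    tensor_isJordanTypeOf _ _ hux hu4 a ha _ _ hzw hz4 b hb, by decide,
    tensor_not_isSL _ _ hux a ha _ _ hz4 b hb _ hC (by rw [dC, dC]; rfl)⟩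
  · rw [dA, List.getD_eq_default _ _ (by simpa using hd)]
  · rw [dB, List.getD_eq_default _ _ (by simpa using hd)]
  · rw [dC, List.getD_eq_default _ _ (by simpa using hd)]
  · have h25 : Module.finrank k ((MvPolynomial (Fin 2) k ⧸ IA) ⊗[k]
        (MvPolynomial (Fin 2) k ⧸ IB)) = 25 := by
      rw [Module.finrank_eq_card_basis (a.tensorProduct b)]; rfl
    rw [h25]
    simp only [conjHilb, dC]
    have hn : ∀ i : ℕ, Set.ncard {d : ℕ | i + 1 ≤ [1, 3, 5, 7, 5, 3, 1].getD d 0} =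
        ((Finset.range 7).filter fun d => i + 1 ≤ [1, 3, 5, 7, 5, 3, 1].getD d 0).card := by
      intro i
      rw [← Set.ncard_coe_finset]
      congr 1
      ext d
      simp only [Set.mem_ofPred_eq, Finset.coe_filter, Finset.mem_range]
      refine ⟨fun h => ⟨?_, h⟩, fun h => h.2⟩
      by_contra hd
      rw [List.getD_eq_default _ _ (by simpa using hd)] at h
      omega
    simp only [hn]
    decide
end
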